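/- Every code C ⊆ {0,1}^7 with |C| = 18 and d_Z(a,b) ≥ 2 for all distinct a, b ∈ C has at most 48 free points. -/

import Mathlib

/-- Hamming weight of a binary word: the number of ones. -/
def wt {n : ℕ} (a : Fin n → Bool) : ℕ :=
  (Finset.univ.filter (fun i => a i = true)).card

/-- N(a,b) = number of positions where a is 0 and b is 1. -/
def NN {n : ℕ} (a b : Fin n → Bool) : ℕ :=
  (Finset.univ.filter (fun i => a i = false ∧ b i = true)).card

/-- The Z-distance d_Z(a,b) = max(N(a,b), N(b,a)). -/
def dZ {n : ℕ} (a b : Fin n → Bool) : ℕ := max (NN a b) (NN b a)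

/-- A code correcting one asymmetric error: d_Z(a,b) ≥ 2 for distinct codewords. -/
def IsZCode {n : ℕ} (C : Finset (Fin n → Bool)) : Prop :=
  ∀ a ∈ C, ∀ b ∈ C, a ≠ b → 2 ≤ dZ a b

/-- The output ball B_1(a): words obtainable from a by at most one asymmetric (1→0) error. -/
def ball {n : ℕ} (a : Fin n → Bool) : Finset (Fin n → Bool) :=
  Finset.univ.filter (fun y => (∀ i, y i ≤ a i) ∧ wt a - wt y ≤ 1)

/-- The number of free points of a code: words lying in no ball B_1(a), a ∈ C. -/
def freeCount {n : ℕ} (C : Finset (Fin n → Bool)) : ℕ :=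
  (Finset.univ.filter (fun y => ∀ a ∈ C, y ∉ ball a)).card

/-- A two-stage coding algorithm (c1, c2, dec) of lengths n1, n2 with message set `Fin M`
is successful if it correctly decodes under at most one asymmetric error in total. -/
def TwoStageSuccess (n1 n2 M : ℕ)
    (c1 : Fin M → (Fin n1 → Bool))
    (c2 : Fin M → (Fin n1 → Bool) → (Fin n2 → Bool))
    (dec : (Fin n1 → Bool) → (Fin n2 → Bool) → Fin M) : Prop :=
  ∀ (m : Fin M) (y1 : Fin n1 → Bool) (y2 : Fin n2 → Bool),
    (∀ i, y1 i ≤ c1 m i) → (∀ i, y2 i ≤ c2 m y1 i) →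
    (wt (c1 m) - wt y1) + (wt (c2 m y1) - wt y2) ≤ 1 →
    dec y1 y2 = m

open Finset in
/-- Counting incidences between positions and words by positions or by words. -/
lemma sum_card_filter_eq_sum_wt {n : ℕ} (D : Finset (Fin n → Bool)) :
    ∑ v, #{c ∈ D | c v = true} = ∑ c ∈ D, wt c := by
  simp only [wt, card_filter]
  exact sum_comm

open Finset in
lemma NN_add_card_overlap {n : ℕ} (a b : Fin n → Bool) :
    NN a b + #{i | a i = true ∧ b i = true} = wt b := by
  unfold NN wt
  rw [← card_union_of_disjoint]
  · congr 1
    ext i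
    cases h : a i <;> simp [h]
  · rw [disjoint_filter]
    rintro i - ⟨h, -⟩ ⟨h', -⟩
    simp_all

lemma NN_le_wt {n : ℕ} (a b : Fin n → Bool) : NN a b ≤ wt b :=
  (Nat.le_add_right _ _).trans (NN_add_card_overlap a b).le

open Finset in
/-- Distinct codewords overlap in at least two positions less than the larger weight. -/
lemma IsZCode.card_overlap_add_two_le {n : ℕ} {C : Finset (Fin n → Bool)} (hC : IsZCode C)
    {a b : Fin n → Bool} (ha : a ∈ C) (hb : b ∈ C) (hab : a ≠ b) :
    #{i | a i = true ∧ b i = true} + 2 ≤ max (wt a) (wt b) := by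
  have h := hC a ha b hb hab
  have h₁ := NN_add_card_overlap a b
  have h₂ := NN_add_card_overlap b a
  simp only [and_comm (a := b _ = true)] at h₂
  unfold dZ at h
  omega

open Finset in
lemma IsZCode.card_wt_le_one {n : ℕ} {C : Finset (Fin n → Bool)} (hC : IsZCode C) :
    #{c ∈ C | wt c ≤ 1} ≤ 1 := by
  rw [card_le_one]
  intro a ha b hb
  rw [mem_filter] at ha hb
  by_contra hab
  have := hC.card_overlap_add_two_le ha.1 hb.1 hab
  omega

open Finset in
lemma IsZCode.card_wt_two_through_le_one {n : ℕ} {C : Finset (Fin n → Bool)} (hC : IsZCode C)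
    (v : Fin n) : #{c ∈ {c ∈ C | wt c = 2} | c v = true} ≤ 1 := by
  rw [card_le_one]
  intro a ha b hb
  simp only [mem_filter] at ha hb
  by_contra hab
  have := hC.card_overlap_add_two_le ha.1.1 hb.1.1 hab
  have : 0 < #{i | a i = true ∧ b i = true} := card_pos.2 ⟨v, by simp [ha.2, hb.2]⟩
  omega

open Finset in
/-- The codewords of weight at most three through `v` are disjoint away from `v`. -/
lemma IsZCode.sum_wt_sub_one_through_le {n : ℕ} {C : Finset (Fin n → Bool)} (hC : IsZCode C)
    (v : Fin n) : ∑ c ∈ C with wt c ≤ 3 ∧ c v = true, (wt c - 1) ≤ n - 1 := by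
  have hcard : ∀ c ∈ C.filter (fun c => wt c ≤ 3 ∧ c v = true),
      wt c - 1 = #((univ.filter (fun i => c i = true)).erase v) := by
    intro c hc
    rw [card_erase_of_mem (by simpa using (mem_filter.1 hc).2.2), wt]
  rw [sum_congr rfl hcard, ← card_biUnion]
  · calc _ ≤ #((univ : Finset (Fin n)).erase v) := card_le_card (by
            intro i
            simp only [mem_biUnion, mem_erase]
            rintro ⟨c, -, hi, -⟩
            exact ⟨hi, mem_univ i⟩)
      _ = n - 1 := by simp
  · intro a ha b hb hab
    rw [mem_coe, mem_filter] at ha hb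
    refine disjoint_left.2 ?_
    intro j hja hjb
    simp only [mem_erase, mem_filter, mem_univ, true_and] at hja hjb
    have h := hC.card_overlap_add_two_le ha.1 hb.1 hab
    have : 1 < #{i | a i = true ∧ b i = true} :=
      one_lt_card.2 ⟨j, by simp [hja, hjb], v, by simp [ha.2.2, hb.2.2], hja.1⟩
    omega

open Finset in
lemma IsZCode.card_wt_two_add_card_wt_three_through_le {C : Finset (Fin 7 → Bool)}
    (hC : IsZCode C) (v : Fin 7) :
    #{c ∈ {c ∈ C | wt c = 2} | c v = true} + #{c ∈ {c ∈ C | wt c = 3} | c v = true} ≤ 3 := by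
  have h₁ := hC.card_wt_two_through_le_one v
  have h₂ : #{c ∈ {c ∈ C | wt c = 2} | c v = true} +
      2 * #{c ∈ {c ∈ C | wt c = 3} | c v = true} ≤ 7 - 1 := by
    refine le_trans ?_ (hC.sum_wt_sub_one_through_le v)
    simp only [card_filter, sum_filter, mul_sum, ← sum_add_distrib]
    refine sum_le_sum fun c _ => ?_
    split_ifs <;> simp_all
  omega

open Finset in
lemma IsZCode.two_mul_card_wt_two_le {n : ℕ} {C : Finset (Fin n → Bool)} (hC : IsZCode C) :
    2 * #{c ∈ C | wt c = 2} ≤ n := by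
  calc 2 * #{c ∈ C | wt c = 2} = ∑ c ∈ C with wt c = 2, wt c := by
        rw [sum_congr rfl fun c hc => (mem_filter.1 hc).2, sum_const, smul_eq_mul, mul_comm]
    _ = ∑ v, #{c ∈ {c ∈ C | wt c = 2} | c v = true} := (sum_card_filter_eq_sum_wt _).symm
    _ ≤ ∑ _v : Fin n, 1 := sum_le_sum fun v _ => hC.card_wt_two_through_le_one v
    _ = n := by simp

open Finset in
lemma IsZCode.two_mul_card_wt_two_add_three_mul_card_wt_three_le {C : Finset (Fin 7 → Bool)}
    (hC : IsZCode C) : 2 * #{c ∈ C | wt c = 2} + 3 * #{c ∈ C | wt c = 3} ≤ 21 := by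
  have key (k : ℕ) : k * #{c ∈ C | wt c = k} =
      ∑ v, #{c ∈ {c ∈ C | wt c = k} | c v = true} := by
    rw [sum_card_filter_eq_sum_wt, sum_congr rfl fun c hc => (mem_filter.1 hc).2, sum_const,
      smul_eq_mul, mul_comm]
  rw [key, key, ← sum_add_distrib]
  exact (sum_le_sum fun v _ => hC.card_wt_two_add_card_wt_three_through_le v).trans (by simp)

/-- The complementary word. -/
def complWord {n : ℕ} (a : Fin n → Bool) : Fin n → Bool := fun i => !a i

lemma complWord_injective {n : ℕ} : Function.Injective (complWord (n := n)) := by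
  intro a b h
  ext i
  simpa [complWord] using congrFun h i

open Finset in
lemma wt_complWord {n : ℕ} (a : Fin n → Bool) : wt (complWord a) + wt a = n := by
  have h := card_filter_add_card_filter_not (s := (univ : Finset (Fin n))) (fun i => a i = true)
  simp only [wt, complWord, Bool.not_eq_true', card_univ, Fintype.card_fin, Bool.not_eq_true] at h ⊢
  omega

lemma NN_complWord {n : ℕ} (a b : Fin n → Bool) : NN (complWord a) (complWord b) = NN b a := by
  simp [NN, complWord, and_comm]

lemma IsZCode.image_complWord {n : ℕ} {C : Finset (Fin n → Bool)} (hC : IsZCode C) :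
    IsZCode (C.image complWord) := by
  intro a' ha' b' hb' hab
  obtain ⟨a, ha, rfl⟩ := Finset.mem_image.1 ha'
  obtain ⟨b, hb, rfl⟩ := Finset.mem_image.1 hb'
  rw [dZ, NN_complWord, NN_complWord, max_comm]
  exact hC a ha b hb fun h => hab (h ▸ rfl)

open Finset in
lemma card_filter_image_complWord {n : ℕ} (C : Finset (Fin n → Bool)) (p : ℕ → Prop)
    [DecidablePred p] : #{c ∈ C.image complWord | p (wt c)} = #{c ∈ C | p (n - wt c)} := by
  rw [filter_image, card_image_of_injective _ complWord_injective]
  have h (c : Fin n → Bool) : wt (complWord c) = n - wt c := by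
    have := wt_complWord c
    omega
  simp only [h]

open Finset in
lemma IsZCode.le_sum_wt {C : Finset (Fin 7 → Bool)} (hC : IsZCode C) (hcard : #C = 18) :
    62 ≤ ∑ c ∈ C, wt c := by
  have hle (c : Fin 7 → Bool) : wt c ≤ 7 := by
    have := wt_complWord c
    omega
  have h₁ := hC.card_wt_le_one
  have h₂ := hC.two_mul_card_wt_two_le
  have h₃ := hC.two_mul_card_wt_two_add_three_mul_card_wt_three_le
  have k₁ := hC.image_complWord.card_wt_le_one
  have k₂ := hC.image_complWord.two_mul_card_wt_two_le
  have k₃ := hC.image_complWord.two_mul_card_wt_two_add_three_mul_card_wt_three_le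
  rw [card_filter_image_complWord C (· = 2)] at k₂ k₃
  rw [card_filter_image_complWord C (· = 3)] at k₃
  rw [card_filter_image_complWord C (· ≤ 1)] at k₁
  have htotal : #C = #{c ∈ C | wt c ≤ 1} + #{c ∈ C | wt c = 2} + #{c ∈ C | wt c = 3} +
      #{c ∈ C | 7 - wt c = 3} + #{c ∈ C | 7 - wt c = 2} + #{c ∈ C | 7 - wt c ≤ 1} := by
    rw [card_eq_sum_ones]
    simp only [card_filter, ← sum_add_distrib]
    refine sum_congr rfl fun c _ => ?_
    have := hle c
    split_ifs <;> omega
  have hwt : 2 * #{c ∈ C | wt c = 2} + 3 * #{c ∈ C | wt c = 3} + 4 * #{c ∈ C | 7 - wt c = 3} +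
      5 * #{c ∈ C | 7 - wt c = 2} + 6 * #{c ∈ C | 7 - wt c ≤ 1} ≤ ∑ c ∈ C, wt c := by
    simp only [card_filter, mul_sum, ← sum_add_distrib]
    refine sum_le_sum fun c _ => ?_
    have := hle c
    split_ifs <;> omega
  omega

open Finset in
lemma wt_add_one_le_card_ball {n : ℕ} (a : Fin n → Bool) : wt a + 1 ≤ #(ball a) := by
  classical
  have hwt (i : Fin n) (hi : a i = true) : wt (Function.update a i false) = wt a - 1 := by
    rw [wt, wt, ← card_erase_of_mem (a := i) (by simpa using hi)]
    congr 1
    ext j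
    by_cases hj : j = i
    · subst hj; simp
    · simp [hj]
  have hinj : Set.InjOn (fun i => Function.update a i false)
      (univ.filter (fun i => a i = true) : Finset (Fin n)) := by
    intro i hi j hj h
    by_contra hij
    have := congrFun h i
    simp_all
  have hnot : a ∉ (univ.filter (fun i => a i = true)).image
      (fun i => Function.update a i false) := by
    simp only [mem_image, mem_filter, mem_univ, true_and, not_exists, not_and]
    intro i hi h
    have := congrFun h i
    simp_all
  calc wt a + 1 = #(insert a ((univ.filter (fun i => a i = true)).image
        (fun i => Function.update a i false))) := by
        rw [card_insert_of_notMem hnot, card_image_of_injOn hinj, wt]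
    _ ≤ #(ball a) := card_le_card (by
        intro y hy
        simp only [mem_insert, mem_image, mem_filter, mem_univ, true_and] at hy
        rw [ball, mem_filter]
        obtain rfl | ⟨i, hi, rfl⟩ := hy
        · simp
        · refine ⟨mem_univ _, fun j => ?_, by rw [hwt i hi]; omega⟩
          by_cases hj : j = i
          · subst hj; simp
          · simp [hj])

open Finset in
/-- If the output ball of `b` contains a word below `a`, then `NN a b ≤ 1`. -/
lemma NN_le_one_of_mem_ball {n : ℕ} {a b y : Fin n → Bool} (hya : ∀ i, y i ≤ a i)
    (hyb : y ∈ ball b) : NN a b ≤ 1 := by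
  rw [ball, mem_filter] at hyb
  have hoverlap : wt y ≤ #{i | a i = true ∧ b i = true} := card_le_card (by
    intro i hi
    have hyi : y i = true := by simpa using hi
    simp [Bool.le_iff_imp.1 (hya i) hyi, Bool.le_iff_imp.1 (hyb.2.1 i) hyi])
  have := NN_add_card_overlap a b
  omega

open Finset in
lemma IsZCode.pairwiseDisjoint_ball {n : ℕ} {C : Finset (Fin n → Bool)} (hC : IsZCode C) :
    (C : Set (Fin n → Bool)).PairwiseDisjoint ball := by
  intro a ha b hb hab
  refine disjoint_left.2 fun y hya hyb => ?_
  have h₁ := NN_le_one_of_mem_ball (mem_filter.1 hya).2.1 hyb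
  have h₂ := NN_le_one_of_mem_ball (mem_filter.1 hyb).2.1 hya
  have := hC a ha b hb hab
  unfold dZ at this
  omega

open Finset in
lemma IsZCode.freeCount_add_sum_wt_add_card_le {n : ℕ} {C : Finset (Fin n → Bool)}
    (hC : IsZCode C) : freeCount C + (∑ c ∈ C, wt c + #C) ≤ 2 ^ n := by
  classical
  have hfree : freeCount C = #(C.biUnion ball)ᶜ := by
    rw [freeCount]
    congr 1
    ext y
    simp
  have hsum : ∑ c ∈ C, wt c + #C ≤ #(C.biUnion ball) := by
    rw [card_biUnion hC.pairwiseDisjoint_ball, card_eq_sum_ones, ← sum_add_distrib]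
    exact sum_le_sum fun c _ => wt_add_one_le_card_ball c
  have := card_compl_add_card (C.biUnion ball)
  rw [← hfree] at this
  simp only [Fintype.card_pi, Fintype.card_bool, prod_const, card_univ, Fintype.card_fin] at this
  omega

theorem free_points_upper_bound_length_7 :
    ∀ C : Finset (Fin 7 → Bool), IsZCode C → C.card = 18 → freeCount C ≤ 48 := by
  intro C hC hcard
  have h₁ := hC.le_sum_wt hcard
  have h₂ := hC.freeCount_add_sum_wt_add_card_le
  omega
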